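/- Let E denote the (commutative) subalgebra of A generated by x₁², x₂², x₃², and let Ω ∈ B^d be a coboundary of degree d ≥ 3. (1) If d is odd, then Ω = ∂(x₁x₂ f + x₁x₃ g + x₂x₃ h) for some f, g, h ∈ E. (2) If d is even, then Ω = ∂(x₁ f + x₂ g + x₃ h + x₁x₂x₃ u) for some f, g, h, u ∈ E. -/

import Mathlib

/-!
Let `E` be the subalgebra of `A` generated by the squares of the generators. Anticommuting the
generators into increasing order writes every element of `A` as an `E`-linear combination of
the eight squarefree monomials. By parity of the number of factors, elements of even
degree only involve `1, x₁x₂, x₁x₃, x₂x₃`, and those of odd degree only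
`x₁, x₂, x₃, x₁x₂x₃` (`deg_normal_form`). The squares `xⱼ²` are central, so
`∂(xᵢ²) = ∂(xᵢ)xᵢ - xᵢ∂(xᵢ) = 0`; hence `∂` is `E`-linear and kills `E` (`d_eq_zero`).
For a coboundary `∂a` of odd degree, the component of `a` in `E` can therefore be dropped;
in even degree the normal form of `a` is already the required one.
-/

noncomputable section

/-- The skew-commutation relations `xᵢxⱼ + xⱼxᵢ = 0` (`i ≠ j`) among the three generators. -/
inductive SkewRel (k : Type) [Field k] :
    FreeAlgebra k (Fin 3) → FreeAlgebra k (Fin 3) → Prop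
  | r01 : SkewRel k
      (FreeAlgebra.ι k 0 * FreeAlgebra.ι k 1 + FreeAlgebra.ι k 1 * FreeAlgebra.ι k 0) 0
  | r12 : SkewRel k
      (FreeAlgebra.ι k 1 * FreeAlgebra.ι k 2 + FreeAlgebra.ι k 2 * FreeAlgebra.ι k 1) 0
  | r20 : SkewRel k
      (FreeAlgebra.ι k 2 * FreeAlgebra.ι k 0 + FreeAlgebra.ι k 0 * FreeAlgebra.ι k 2) 0

/-- The graded skew polynomial algebra `A = k⟨x₁,x₂,x₃⟩/(x₁x₂+x₂x₁, x₂x₃+x₃x₂, x₃x₁+x₁x₃)`. -/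
abbrev SkewAlg (k : Type) [Field k] := RingQuot (SkewRel k)

/-- The generators `x₁, x₂, x₃` of `A` (indexed by `0, 1, 2`). -/
def X (k : Type) [Field k] (i : Fin 3) : SkewAlg k :=
  RingQuot.mkAlgHom k (SkewRel k) (FreeAlgebra.ι k i)

/-- The degree-`n` homogeneous component `Aⁿ` of `A`: the `n`-th power of the span of the
generators (the algebra `A` is generated in degree `1` by `x₁,x₂,x₃`, and the defining
relations are homogeneous). -/
def deg (k : Type) [Field k] (n : ℕ) : Submodule k (SkewAlg k) :=
  (Submodule.span k {X k 0, X k 1, X k 2}) ^ n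

/-- A differential on `A` determined by a matrix `M ∈ M₃(k)`: a `k`-linear map of degree `1`
squaring to zero, satisfying the graded Leibniz rule, with
`∂(xᵢ) = mᵢ₁x₁² + mᵢ₂x₂² + mᵢ₃x₃²`. -/
structure DGDiff (k : Type) [Field k] (M : Matrix (Fin 3) (Fin 3) k) where
  d : SkewAlg k →ₗ[k] SkewAlg k
  grade : ∀ n : ℕ, ∀ a ∈ deg k n, d a ∈ deg k (n + 1)
  dd : ∀ a : SkewAlg k, d (d a) = 0
  leibniz : ∀ n : ℕ, ∀ a ∈ deg k n, ∀ b : SkewAlg k,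
    d (a * b) = d a * b + ((-1 : k) ^ n) • (a * d b)
  dX : ∀ i : Fin 3,
    d (X k i) = M i 0 • (X k 0) ^ 2 + M i 1 • (X k 1) ^ 2 + M i 2 • (X k 2) ^ 2

/-- `Zⁿ`, the space of cocycles of degree `n`. -/
def cocycle (k : Type) [Field k] {M : Matrix (Fin 3) (Fin 3) k} (D : DGDiff k M) (n : ℕ) :
    Submodule k (SkewAlg k) :=
  LinearMap.ker D.d ⊓ deg k n

/-- `Bⁿ`, the space of coboundaries of degree `n` (`B⁰ = 0`, `Bⁿ⁺¹ = ∂(Aⁿ)`). -/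
def cobound (k : Type) [Field k] {M : Matrix (Fin 3) (Fin 3) k} (D : DGDiff k M) :
    ℕ → Submodule k (SkewAlg k)
  | 0 => ⊥
  | n + 1 => (deg k n).map D.d

namespace SkewAlg

variable {k : Type} [Field k]

/-- In `A`, the element `-b` is written `(-1 : k) • b`, using only the semiring and module
structures of the quotient. -/
lemma eq_neg_one_smul {a b : SkewAlg k} (h : b + a = 0) : a = (-1 : k) • b := by
  calc a = (b + a) + (-1 : k) • b := by module
    _ = (-1 : k) • b := by rw [h, zero_add]

lemma X_one_mul_zero : X k 1 * X k 0 = (-1 : k) • (X k 0 * X k 1) := by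
  have h := RingQuot.mkAlgHom_rel k (SkewRel.r01 (k := k))
  simp only [map_add, map_mul, map_zero] at h
  exact eq_neg_one_smul h

lemma X_two_mul_one : X k 2 * X k 1 = (-1 : k) • (X k 1 * X k 2) := by
  have h := RingQuot.mkAlgHom_rel k (SkewRel.r12 (k := k))
  simp only [map_add, map_mul, map_zero] at h
  exact eq_neg_one_smul h

lemma X_two_mul_zero : X k 2 * X k 0 = (-1 : k) • (X k 0 * X k 2) := by
  have h := RingQuot.mkAlgHom_rel k (SkewRel.r20 (k := k))
  simp only [map_add, map_mul, map_zero] at h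
  exact eq_neg_one_smul ((add_comm _ _).trans h)

/-! The next three lemmas apply the commutation rules inside a right-associated product, so that
`simp` can sort any word in the generators. -/

lemma X_one_mul_zero_mul (t : SkewAlg k) :
    X k 1 * (X k 0 * t) = (-1 : k) • (X k 0 * (X k 1 * t)) := by
  rw [← mul_assoc, X_one_mul_zero, smul_mul_assoc, mul_assoc]

lemma X_two_mul_one_mul (t : SkewAlg k) :
    X k 2 * (X k 1 * t) = (-1 : k) • (X k 1 * (X k 2 * t)) := by
  rw [← mul_assoc, X_two_mul_one, smul_mul_assoc, mul_assoc]

lemma X_two_mul_zero_mul (t : SkewAlg k) :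
    X k 2 * (X k 0 * t) = (-1 : k) • (X k 0 * (X k 2 * t)) := by
  rw [← mul_assoc, X_two_mul_zero, smul_mul_assoc, mul_assoc]

variable (k) in
/-- The subalgebra `E` of `A` generated by the squares of the generators. -/
abbrev sqAlg : Subalgebra k (SkewAlg k) :=
  Algebra.adjoin k {(X k 0) ^ 2, (X k 1) ^ 2, (X k 2) ^ 2}

lemma X_mul_X_mem (i : Fin 3) : X k i * X k i ∈ sqAlg k := by
  rw [← sq]
  apply Algebra.subset_adjoin
  fin_cases i <;> simp

/-- Left multiplication by `xᵢ²` preserves `E`. -/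
lemma X_mul_X_mul_mem (i : Fin 3) {f : SkewAlg k} (hf : f ∈ sqAlg k) :
    X k i * (X k i * f) ∈ sqAlg k := by
  rw [← mul_assoc]
  exact mul_mem (X_mul_X_mem i) hf

lemma neg_one_smul_mem {f : SkewAlg k} (hf : f ∈ sqAlg k) : (-1 : k) • f ∈ sqAlg k :=
  Subalgebra.smul_mem _ hf _

/-- The combinations over `E` of the squarefree monomials of even degree. -/
def IsEvenForm (a : SkewAlg k) : Prop :=
  ∃ e ∈ sqAlg k, ∃ f ∈ sqAlg k, ∃ g ∈ sqAlg k, ∃ h ∈ sqAlg k,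
    a = e + (X k 0 * X k 1 * f + X k 0 * X k 2 * g + X k 1 * X k 2 * h)

/-- The combinations over `E` of the squarefree monomials of odd degree. -/
def IsOddForm (a : SkewAlg k) : Prop :=
  ∃ f ∈ sqAlg k, ∃ g ∈ sqAlg k, ∃ h ∈ sqAlg k, ∃ u ∈ sqAlg k,
    a = X k 0 * f + X k 1 * g + X k 2 * h + X k 0 * X k 1 * X k 2 * u

lemma IsEvenForm.add {a b : SkewAlg k} (ha : IsEvenForm a) (hb : IsEvenForm b) :
    IsEvenForm (a + b) := by
  obtain ⟨e, he, f, hf, g, hg, h, hh, rfl⟩ := ha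
  obtain ⟨e', he', f', hf', g', hg', h', hh', rfl⟩ := hb
  refine ⟨_, add_mem he he', _, add_mem hf hf', _, add_mem hg hg', _, add_mem hh hh', ?_⟩
  simp only [mul_add]
  abel

lemma IsOddForm.add {a b : SkewAlg k} (ha : IsOddForm a) (hb : IsOddForm b) :
    IsOddForm (a + b) := by
  obtain ⟨e, he, f, hf, g, hg, h, hh, rfl⟩ := ha
  obtain ⟨e', he', f', hf', g', hg', h', hh', rfl⟩ := hb
  refine ⟨_, add_mem he he', _, add_mem hf hf', _, add_mem hg hg', _, add_mem hh hh', ?_⟩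
  simp only [mul_add]
  abel

lemma IsEvenForm.smul (c : k) {a : SkewAlg k} (ha : IsEvenForm a) : IsEvenForm (c • a) := by
  obtain ⟨e, he, f, hf, g, hg, h, hh, rfl⟩ := ha
  refine ⟨c • e, Subalgebra.smul_mem _ he c, c • f, Subalgebra.smul_mem _ hf c,
    c • g, Subalgebra.smul_mem _ hg c, c • h, Subalgebra.smul_mem _ hh c, ?_⟩
  simp only [smul_add, mul_smul_comm]

lemma IsOddForm.smul (c : k) {a : SkewAlg k} (ha : IsOddForm a) : IsOddForm (c • a) := by
  obtain ⟨e, he, f, hf, g, hg, h, hh, rfl⟩ := ha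
  refine ⟨c • e, Subalgebra.smul_mem _ he c, c • f, Subalgebra.smul_mem _ hf c,
    c • g, Subalgebra.smul_mem _ hg c, c • h, Subalgebra.smul_mem _ hh c, ?_⟩
  simp only [smul_add, mul_smul_comm]

lemma isEvenForm_zero : IsEvenForm (0 : SkewAlg k) :=
  ⟨0, zero_mem _, 0, zero_mem _, 0, zero_mem _, 0, zero_mem _, by simp⟩

lemma isOddForm_zero : IsOddForm (0 : SkewAlg k) :=
  ⟨0, zero_mem _, 0, zero_mem _, 0, zero_mem _, 0, zero_mem _, by simp⟩

lemma IsEvenForm.X_mul (i : Fin 3) {a : SkewAlg k} (ha : IsEvenForm a) :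
    IsOddForm (X k i * a) := by
  obtain ⟨e, he, f, hf, g, hg, h, hh, rfl⟩ := ha
  -- The new coefficients are read off after sorting the generators of `xᵢ · a`.
  fin_cases i
  · refine ⟨e, he, _, X_mul_X_mul_mem 0 hf, _, X_mul_X_mul_mem 0 hg, h, hh, ?_⟩
    simp [mul_add, mul_assoc, X_one_mul_zero_mul, X_two_mul_zero_mul]
    module
  · refine ⟨_, neg_one_smul_mem (X_mul_X_mul_mem 1 hf), e, he, _, X_mul_X_mul_mem 1 hh,
      _, neg_one_smul_mem hg, ?_⟩
    simp [mul_add, mul_assoc, X_one_mul_zero_mul, X_two_mul_one_mul]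
    module
  · refine ⟨_, neg_one_smul_mem (X_mul_X_mul_mem 2 hg), _, neg_one_smul_mem (X_mul_X_mul_mem 2 hh), e, he,
      f, hf, ?_⟩
    simp [mul_add, mul_assoc, X_two_mul_one_mul, X_two_mul_zero_mul]
    module

lemma IsOddForm.X_mul (i : Fin 3) {a : SkewAlg k} (ha : IsOddForm a) :
    IsEvenForm (X k i * a) := by
  obtain ⟨f, hf, g, hg, h, hh, u, hu, rfl⟩ := ha
  -- The new coefficients are read off after sorting the generators of `xᵢ · a`.
  fin_cases i
  · refine ⟨_, X_mul_X_mul_mem 0 hf, g, hg, h, hh, _, X_mul_X_mul_mem 0 hu, ?_⟩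
    simp [mul_add, mul_assoc, X_one_mul_zero_mul, X_two_mul_zero_mul]
    module
  · refine ⟨_, X_mul_X_mul_mem 1 hg, _, neg_one_smul_mem hf, _, neg_one_smul_mem (X_mul_X_mul_mem 1 hu),
      h, hh, ?_⟩
    simp [mul_add, mul_assoc, X_one_mul_zero_mul, X_two_mul_one_mul]
    module
  · refine ⟨_, X_mul_X_mul_mem 2 hh, _, X_mul_X_mul_mem 2 hu, _, neg_one_smul_mem hf, _, neg_one_smul_mem hg, ?_⟩
    simp [mul_add, mul_assoc, X_two_mul_one_mul, X_two_mul_zero_mul]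
    module

/-- Induction principle for homogeneous elements: an element of degree `n + 1` is a sum of scalar
multiples of products `xᵢ b` with `b` of degree `n`. -/
lemma deg_succ_induction {n : ℕ} {P : SkewAlg k → Prop} (zero : P 0)
    (add : ∀ a b, P a → P b → P (a + b)) (smul : ∀ (c : k) a, P a → P (c • a))
    (X_mul : ∀ i, ∀ b ∈ deg k n, P (X k i * b)) {a : SkewAlg k} (ha : a ∈ deg k (n + 1)) :
    P a := by
  rw [deg, pow_succ'] at ha
  refine Submodule.mul_induction_on ha (fun s hs b hb => ?_) add
  induction hs using Submodule.span_induction with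
  | mem s hs =>
    rcases hs with rfl | rfl | rfl
    exacts [X_mul 0 b hb, X_mul 1 b hb, X_mul 2 b hb]
  | zero => rwa [zero_mul]
  | add s t _ _ hs ht => rw [add_mul]; exact add _ _ hs ht
  | smul c s _ hs => rw [smul_mul_assoc]; exact smul c _ hs

lemma deg_normal_form (n : ℕ) : ∀ a ∈ deg k n,
    (Even n → IsEvenForm a) ∧ (Odd n → IsOddForm a) := by
  induction n with
  | zero =>
    intro a ha
    rw [deg, pow_zero, Submodule.mem_one] at ha
    obtain ⟨c, rfl⟩ := ha
    exact ⟨fun _ => ⟨_, Subalgebra.algebraMap_mem _ c, 0, zero_mem _, 0, zero_mem _,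
      0, zero_mem _, by simp⟩, fun h => absurd h (by decide)⟩
  | succ n ih =>
    intro a ha
    constructor
    · intro hn
      refine deg_succ_induction isEvenForm_zero (fun _ _ => .add) (fun c _ => .smul c)
        (fun i b hb => ?_) ha
      exact ((ih b hb).2 (by grind)).X_mul i
    · intro hn
      refine deg_succ_induction isOddForm_zero (fun _ _ => .add) (fun c _ => .smul c)
        (fun i b hb => ?_) ha
      exact ((ih b hb).1 (by grind)).X_mul i

/-- The squares of the generators commute with the generators. -/
lemma sq_mul_X (i j : Fin 3) : X k i ^ 2 * X k j = X k j * X k i ^ 2 := by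
  fin_cases i <;> fin_cases j <;>
    simp [sq, mul_assoc, smul_smul, X_one_mul_zero, X_two_mul_one, X_two_mul_zero, X_one_mul_zero_mul,
      X_two_mul_one_mul, X_two_mul_zero_mul]

lemma X_mem_deg (i : Fin 3) : X k i ∈ deg k 1 := by
  rw [deg, pow_one]
  apply Submodule.subset_span
  fin_cases i <;> simp

variable {M : Matrix (Fin 3) (Fin 3) k} (D : DGDiff k M)

lemma d_sq (i : Fin 3) : D.d (X k i ^ 2) = 0 := by
  rw [sq, D.leibniz 1 _ (X_mem_deg i), D.dX]
  simp only [add_mul, mul_add, smul_mul_assoc, mul_smul_comm, sq_mul_X]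
  module

lemma d_one : D.d 1 = 0 := by
  have h := D.leibniz 0 1 (by rw [deg, pow_zero]; exact Submodule.one_le.mp le_rfl) 1
  simpa using h

lemma d_sq_mul (i : Fin 3) (b : SkewAlg k) : D.d (X k i ^ 2 * b) = X k i ^ 2 * D.d b := by
  have h : X k i ^ 2 ∈ deg k 2 := by
    have := Submodule.pow_mem_pow _ (X_mem_deg (k := k) i) 2
    rwa [deg, pow_one] at this
  rw [D.leibniz 2 _ h, d_sq]
  simp

/-- The differential is linear over `E`. -/
lemma d_mul_of_mem {e : SkewAlg k} (he : e ∈ sqAlg k) : ∀ b, D.d (e * b) = e * D.d b := by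
  induction he using Algebra.adjoin_induction with
  | mem e he =>
    rcases he with rfl | rfl | rfl
    exacts [d_sq_mul D 0, d_sq_mul D 1, d_sq_mul D 2]
  | algebraMap c => intro b; rw [← Algebra.smul_def, map_smul, Algebra.smul_def]
  | add e f _ _ he hf => intro b; rw [add_mul, map_add, he, hf, add_mul]
  | mul e f _ _ he hf => intro b; rw [mul_assoc, he, hf, mul_assoc]

/-- The subalgebra `E` consists of cocycles. -/
lemma d_eq_zero {e : SkewAlg k} (he : e ∈ sqAlg k) : D.d e = 0 := by
  have h := d_mul_of_mem D he 1
  rwa [mul_one, d_one, mul_zero] at h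

end SkewAlg

open SkewAlg

/-- Let `E` be the subalgebra of `A` generated by `x₁², x₂², x₃²` and let
`Ω ∈ B^d` be a coboundary of degree `d ≥ 3`.  If `d` is odd then
`Ω = ∂(x₁x₂f + x₁x₃g + x₂x₃h)` for some `f, g, h ∈ E`; if `d` is even then
`Ω = ∂(x₁f + x₂g + x₃h + x₁x₂x₃u)` for some `f, g, h, u ∈ E`. -/
theorem stmt4 (k : Type) [Field k] [IsAlgClosed k] [CharZero k]
    (M : Matrix (Fin 3) (Fin 3) k) (D : DGDiff k M)
    (E : Subalgebra k (SkewAlg k))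
    (hE : E = Algebra.adjoin k {(X k 0) ^ 2, (X k 1) ^ 2, (X k 2) ^ 2})
    (d : ℕ) (hd : 3 ≤ d) (Ω : SkewAlg k) (hΩ : Ω ∈ cobound k D d) :
    (Odd d → ∃ f ∈ E, ∃ g ∈ E, ∃ h ∈ E,
      Ω = D.d (X k 0 * X k 1 * f + X k 0 * X k 2 * g + X k 1 * X k 2 * h)) ∧
    (Even d → ∃ f ∈ E, ∃ g ∈ E, ∃ h ∈ E, ∃ u ∈ E,
      Ω = D.d (X k 0 * f + X k 1 * g + X k 2 * h + X k 0 * X k 1 * X k 2 * u)) := by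
  subst hE
  obtain _ | n := d
  · omega
  obtain ⟨a, ha, rfl⟩ := hΩ
  constructor
  · intro hn
    obtain ⟨e, he, f, hf, g, hg, h, hh, rfl⟩ := (deg_normal_form n a ha).1 (by grind)
    exact ⟨f, hf, g, hg, h, hh, by rw [map_add, d_eq_zero D he, zero_add]⟩
  · intro hn
    obtain ⟨f, hf, g, hg, h, hh, u, hu, rfl⟩ := (deg_normal_form n a ha).2 (by grind)
    exact ⟨f, hf, g, hg, h, hh, u, hu, rfl⟩
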